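/- arXiv:2605.08036 — 5 statements merged into one kernel-verified Lean document; each statement's English description precedes it below -/
import Mathlib

section
/- Let ι be a finite type equipped with a preorder ≤ and let A be an invertible ι-by-ι real matrix. If A is lower ≤-triangular, then its inverse A⁻¹ is also lower ≤-triangular. -/
/-!
`A` is lower triangular for the preorder exactly when, for every `j`, it is block triangular for
the partition of the index type into `Set.Ici j` and its complement. This has only two linearly
ordered blocks, and block triangularity for a linear order of blocks passes to inverses.
-/

open Matrix

/-- The blocks are labelled by `Prop`, ordered by `False < True`, so `Set.Ici j` is the first
block. -/
theorem forall_blockTriangular_notMem_Ici_iff {ι R : Type*} [Preorder ι] [Zero R]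
    {A : Matrix ι ι R} :
    (∀ j, A.BlockTriangular (· ∉ Set.Ici j)) ↔ ∀ i j, A i j ≠ 0 → j ≤ i := by
  constructor
  · intro hA i j hij
    by_contra hji
    exact hij (hA j (by simp [lt_iff_le_not_ge, hji]))
  · intro hA j r c hcr
    obtain ⟨hjr, hjc⟩ : ¬j ≤ r ∧ j ≤ c := by simpa using not_le_of_gt hcr
    by_contra hrc
    exact hjr (hjc.trans (hA r c hrc))

theorem inv_lower_triangular_general {ι R : Type*} [Fintype ι] [DecidableEq ι] [Preorder ι]
    [CommRing R] (A : Matrix ι ι R) (hA : IsUnit A) (hTri : ∀ i j, A i j ≠ 0 → j ≤ i) :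
    ∀ i j, A⁻¹ i j ≠ 0 → j ≤ i := by
  have := hA.invertible
  rw [← forall_blockTriangular_notMem_Ici_iff] at hTri ⊢
  exact fun j ↦ blockTriangular_inv_of_blockTriangular (hTri j)

/-- If an invertible matrix over a finite preordered index type is
lower `≤`-triangular, then so is its inverse. -/
theorem inv_lower_triangular {ι : Type*} [Fintype ι] [DecidableEq ι] [Preorder ι]
    (A : Matrix ι ι ℝ) (hA : IsUnit A) (hTri : ∀ i j, A i j ≠ 0 → j ≤ i) :
    ∀ i j, A⁻¹ i j ≠ 0 → j ≤ i :=
  inv_lower_triangular_general A hA hTri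
end

section
/- Let ι be a finite type equipped with a preorder ≤, let S be a downward-closed subset of ι, and let A be an invertible ι-by-ι real matrix which is lower ≤-triangular. Then the chop Â of A to S is invertible, and its inverse equals the chop of A⁻¹ to S, i.e. Â⁻¹ = (A⁻¹)^. -/
section Submatrix

variable {l m n o p q R : Type*} [Fintype n] [Fintype o]

theorem submatrix_mul_of_injective [NonUnitalNonAssocSemiring R] (M : Matrix m n R)
    (N : Matrix n p R) (e₁ : l → m) {e₂ : o → n} (e₃ : q → p) (he₂ : Function.Injective e₂)
    (hM : ∀ i, ∀ j ∉ Set.range e₂, M (e₁ i) j = 0) :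
    (M * N).submatrix e₁ e₃ = M.submatrix e₁ e₂ * N.submatrix e₂ e₃ := by
  ext i k
  simp only [Matrix.submatrix_apply, Matrix.mul_apply]
  symm
  refine Fintype.sum_of_injective e₂ he₂ _ _ (fun j hj => ?_) fun _ => rfl
  rw [hM i j hj, zero_mul]

variable [DecidableEq n] [DecidableEq o] {e : o → n}

theorem submatrix_mul_submatrix_eq_one [NonAssocSemiring R] {M N : Matrix n n R}
    (hMN : M * N = 1) (he : Function.Injective e)
    (hM : ∀ i, ∀ j ∉ Set.range e, M (e i) j = 0) :
    M.submatrix e e * N.submatrix e e = 1 := by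
  rw [← submatrix_mul_of_injective M N e e he hM, hMN, Matrix.submatrix_one e he]

theorem chop_inv_of_lower_triangular_general [CommRing R] {A : Matrix n n R} (hA : IsUnit A)
    (he : Function.Injective e) (hAe : ∀ i, ∀ j ∉ Set.range e, A (e i) j = 0) :
    IsUnit (A.submatrix e e) ∧ (A.submatrix e e)⁻¹ = A⁻¹.submatrix e e := by
  have mul_inv : A * A⁻¹ = 1 := A.mul_nonsing_inv ((Matrix.isUnit_iff_isUnit_det A).mp hA)
  have chop_mul_inv : A.submatrix e e * A⁻¹.submatrix e e = 1 :=
    submatrix_mul_submatrix_eq_one mul_inv he hAe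
  exact ⟨.of_mul_eq_one _ chop_mul_inv, Matrix.inv_eq_right_inv chop_mul_inv⟩

end Submatrix

/-- For a downward-closed subset `S` of a finite preordered index type and an
invertible lower `≤`-triangular matrix `A`, the chop `Â` is invertible and `Â⁻¹ = (A⁻¹)^`. -/
theorem chop_inv_of_lower_triangular {ι : Type*} [Fintype ι] [DecidableEq ι] [Preorder ι]
    (S : Finset ι) (hS : ∀ ⦃i j : ι⦄, i ≤ j → j ∈ S → i ∈ S)
    (A : Matrix ι ι ℝ) (hA : IsUnit A) (hTri : ∀ i j, A i j ≠ 0 → j ≤ i) :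
    IsUnit (A.submatrix (fun i : ↥S => (i : ι)) (fun j : ↥S => (j : ι))) ∧
      (A.submatrix (fun i : ↥S => (i : ι)) (fun j : ↥S => (j : ι)))⁻¹ =
        (A⁻¹).submatrix (fun i : ↥S => (i : ι)) (fun j : ↥S => (j : ι)) :=
  chop_inv_of_lower_triangular_general hA Subtype.val_injective fun i j hj =>
    by_contra fun hij => hj ⟨⟨j, hS (hTri i j hij) i.2⟩, rfl⟩
end

section
/- Let D be a natural number, n : Fin D → ℕ with n d ≥ 1 for all d, and for each d let K⁽ᵈ⁾ be an (n d)-by-(n d) real matrix. Let L⁽ᵈ⁾, R⁽ᵈ⁾, U⁽ᵈ⁾ be the matrices with L⁽ᵈ⁾ i j = 1 if j = 0 or j = i (else 0), R⁽ᵈ⁾ i j = 1 if i = 0 and j = 0 (else 0), and U⁽ᵈ⁾ i j = 1 if i = 0 or j = i (else 0), and set M⁽ᵈ⁾ = (L⁽ᵈ⁾)⁻¹·K⁽ᵈ⁾·(U⁽ᵈ⁾)⁻¹. Let 𝓜 be a finite collection of subsets of Fin D and σ : ℕ → ℝ. Consider matrices indexed by the product index set of all multi-indices i with i d ∈ Fin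 (n d): define K by K i j = Σ_{m ∈ 𝓜} σ(|m|) · Π_{d ∈ m} K⁽ᵈ⁾ (i d) (j d); define 𝐋 by 𝐋 i j = Π_{d} L⁽ᵈ⁾ (i d) (j d); define 𝐔 by 𝐔 i j = Π_{d} U⁽ᵈ⁾ (i d) (j d); and define 𝐌 by 𝐌 i j = Σ_{m ∈ 𝓜} σ(|m|) · Π_{d ∈ m} M⁽ᵈ⁾ (i d) (j d) · Π_{d ∉ m} R⁽ᵈ⁾ (i d) (j d). Then K = 𝐋 · 𝐌 · 𝐔. -/
/-!
Kronecker products are multiplicative, so multiplying `𝐌` by `𝐋` on the left and by `𝐔` on the right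
replaces each tensor factor `A` by `L⁽ᵈ⁾ A U⁽ᵈ⁾`. This turns `M⁽ᵈ⁾` into `K⁽ᵈ⁾`, and `R⁽ᵈ⁾` into the
all-ones matrix, which drops out of every entrywise product. With `e` the basis vector at the base
point `0`, the second claim reads `L e eᵀ U = (L e) (eᵀ U) = 𝟙 𝟙ᵀ`, because `L` is the identity
matrix with its base column replaced by `𝟙`, and `U` is the transpose of `L`.
-/

open Matrix

section PiKronecker

variable {ι α : Type*} [Fintype ι] [CommSemiring α] {k l m n : ι → Type*}

/-- The Kronecker product of a family of matrices, with rows and columns indexed by multi-indices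
instead of iterated pairs. -/
def piKronecker (A : ∀ d, Matrix (m d) (n d) α) : Matrix (∀ d, m d) (∀ d, n d) α :=
  of fun i j => ∏ d, A d (i d) (j d)

lemma piKronecker_apply (A : ∀ d, Matrix (m d) (n d) α) (i : ∀ d, m d) (j : ∀ d, n d) :
    piKronecker A i j = ∏ d, A d (i d) (j d) :=
  rfl

variable [DecidableEq ι]

lemma piKronecker_mul_piKronecker [∀ d, Fintype (m d)] (A : ∀ d, Matrix (l d) (m d) α)
    (B : ∀ d, Matrix (m d) (n d) α) :
    piKronecker A * piKronecker B = piKronecker fun d => A d * B d := by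
  ext i j
  simp only [mul_apply, piKronecker_apply, ← Finset.prod_mul_distrib, Fintype.prod_sum]

/-- The sum of the interaction terms `s ∈ 𝓜`, each a Kronecker product with weight `w s` that has
the factor `A d` in the interacting directions `d ∈ s` and `B d` in the others. -/
def interactionSum (𝓜 : Finset (Finset ι)) (w : Finset ι → α) (A B : ∀ d, Matrix (m d) (n d) α) :
    Matrix (∀ d, m d) (∀ d, n d) α :=
  ∑ s ∈ 𝓜, w s • piKronecker (s.piecewise A B)

lemma interactionSum_apply (𝓜 : Finset (Finset ι)) (w : Finset ι → α)
    (A B : ∀ d, Matrix (m d) (n d) α) (i : ∀ d, m d) (j : ∀ d, n d) :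
    interactionSum 𝓜 w A B i j = ∑ s ∈ 𝓜, w s *
      ((∏ d ∈ s, A d (i d) (j d)) * ∏ d ∈ sᶜ, B d (i d) (j d)) := by
  simp only [interactionSum, Matrix.sum_apply, Matrix.smul_apply, smul_eq_mul, piKronecker_apply]
  refine Finset.sum_congr rfl fun s _ => ?_
  rw [← Finset.prod_mul_prod_compl s]
  congr 2
  · exact Finset.prod_congr rfl fun d hd => by rw [s.piecewise_eq_of_mem A B hd]
  · exact Finset.prod_congr rfl fun d hd => by
      rw [s.piecewise_eq_of_notMem A B (Finset.mem_compl.mp hd)]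

lemma piKronecker_mul_interactionSum_mul_piKronecker [∀ d, Fintype (l d)] [∀ d, Fintype (m d)]
    (𝓜 : Finset (Finset ι)) (w : Finset ι → α) (P : ∀ d, Matrix (k d) (l d) α)
    (A B : ∀ d, Matrix (l d) (m d) α) (Q : ∀ d, Matrix (m d) (n d) α) :
    piKronecker P * interactionSum 𝓜 w A B * piKronecker Q =
      interactionSum 𝓜 w (fun d => P d * A d * Q d) fun d => P d * B d * Q d := by
  simp only [interactionSum, Matrix.mul_sum, Matrix.sum_mul, Matrix.mul_smul, Matrix.smul_mul,
    piKronecker_mul_piKronecker]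
  refine Finset.sum_congr rfl fun s _ => congrArg (w s • piKronecker ·) (funext fun d => ?_)
  by_cases hd : d ∈ s <;> simp only [Finset.piecewise, hd, if_true, if_false]

end PiKronecker

section PointedFactors

variable {κ α : Type*} [DecidableEq κ]

lemma one_updateCol_one_apply [Zero α] [One α] (o i j : κ) :
    (1 : Matrix κ κ α).updateCol o 1 i j = if j = o ∨ j = i then 1 else 0 := by
  simp only [updateCol_apply, one_apply, Pi.one_apply, ite_or, eq_comm]

lemma one_updateRow_one_apply [Zero α] [One α] (o i j : κ) :
    (1 : Matrix κ κ α).updateRow o 1 i j = if i = o ∨ j = i then 1 else 0 := by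
  simp only [updateRow_apply, one_apply, Pi.one_apply, ite_or, eq_comm]

variable [Fintype κ]

lemma det_one_updateCol [CommRing α] (o : κ) (v : κ → α) :
    ((1 : Matrix κ κ α).updateCol o v).det = v o := by
  rw [← cramer_apply, cramer_one, Module.End.one_apply]

lemma det_one_updateRow [CommRing α] (o : κ) (v : κ → α) :
    ((1 : Matrix κ κ α).updateRow o v).det = v o := by
  rw [← cramer_transpose_apply, transpose_one, cramer_one, Module.End.one_apply]

lemma updateCol_mul_single_mul_updateRow {m n : Type*} [Semiring α]
    (A : Matrix m κ α) (B : Matrix κ n α) (o : κ) (v : m → α) (w : n → α) :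
    A.updateCol o v * single o o (1 : α) * B.updateRow o w = vecMulVec v w := by
  have col_eq : (A.updateCol o v).col o = v := funext fun _ => updateCol_self
  have row_eq : (B.updateRow o w).row o = w := updateRow_self
  rw [single_eq_single_vecMulVec_single, mul_vecMulVec, vecMulVec_mul, mulVec_single_one,
    single_one_vecMul, col_eq, row_eq]

end PointedFactors

theorem additive_kernel_factorization_general {ι α : Type*} [Fintype ι] [DecidableEq ι]
    [CommRing α] {κ : ι → Type*} [∀ d, Fintype (κ d)] [∀ d, DecidableEq (κ d)] (o : ∀ d, κ d)
    (K : ∀ d, Matrix (κ d) (κ d) α) (𝓜 : Finset (Finset ι)) (w : Finset ι → α)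
    (L R U : ∀ d, Matrix (κ d) (κ d) α)
    (hL : ∀ d i j, L d i j = if j = o d ∨ j = i then 1 else 0)
    (hR : ∀ d i j, R d i j = if i = o d ∧ j = o d then 1 else 0)
    (hU : ∀ d i j, U d i j = if i = o d ∨ j = i then 1 else 0)
    (M : ∀ d, Matrix (κ d) (κ d) α) (hM : ∀ d, M d = (L d)⁻¹ * K d * (U d)⁻¹)
    (bigK bigL bigU bigM : Matrix (∀ d, κ d) (∀ d, κ d) α)
    (hbigK : ∀ i j, bigK i j = ∑ s ∈ 𝓜, w s * ∏ d ∈ s, K d (i d) (j d))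
    (hbigL : ∀ i j, bigL i j = ∏ d, L d (i d) (j d))
    (hbigU : ∀ i j, bigU i j = ∏ d, U d (i d) (j d))
    (hbigM : ∀ i j, bigM i j = ∑ s ∈ 𝓜, w s *
      ((∏ d ∈ s, M d (i d) (j d)) * ∏ d ∈ sᶜ, R d (i d) (j d))) :
    bigK = bigL * bigM * bigU := by
  have L_eq d : L d = (1 : Matrix _ _ α).updateCol (o d) 1 := by
    ext i j; rw [hL, one_updateCol_one_apply]
  have U_eq d : U d = (1 : Matrix _ _ α).updateRow (o d) 1 := by
    ext i j; rw [hU, one_updateRow_one_apply]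
  have R_eq d : R d = single (o d) (o d) 1 := by
    ext i j; simp only [hR, single_apply, eq_comm]
  have det_L d : IsUnit (L d).det := by simp [L_eq, det_one_updateCol]
  have det_U d : IsUnit (U d).det := by simp [U_eq, det_one_updateRow]
  have LMU d : L d * M d * U d = K d := by
    rw [hM, Matrix.mul_assoc (L d)⁻¹, mul_nonsing_inv_cancel_left _ _ (det_L d),
      nonsing_inv_mul_cancel_right _ _ (det_U d)]
  have LRU d : L d * R d * U d = vecMulVec 1 1 := by
    rw [L_eq, R_eq, U_eq, updateCol_mul_single_mul_updateRow]
  calc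
    bigK = interactionSum 𝓜 w K fun _ => vecMulVec 1 1 := by
      ext i j; simp [hbigK, interactionSum_apply]
    _ = piKronecker L * interactionSum 𝓜 w M R * piKronecker U := by
      simp only [piKronecker_mul_interactionSum_mul_piKronecker, LMU, LRU]
    _ = bigL * bigM * bigU := by
      congr <;> ext i j <;> simp only [hbigL, hbigM, hbigU, piKronecker_apply, interactionSum_apply]

/-- The additive kernel matrix over a complete product grid factorizes as
`K = 𝐋 * 𝐌 * 𝐔`, where `𝐋`, `𝐔` are the Kronecker products of the 1D factors `L⁽ᵈ⁾`,
`U⁽ᵈ⁾` of the all-ones matrices `J⁽ᵈ⁾ = L⁽ᵈ⁾ R⁽ᵈ⁾ U⁽ᵈ⁾`, and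
`𝐌 = Σ_m σ(|m|) M^{[m]} R^{[¬m]}` with `M⁽ᵈ⁾ = (L⁽ᵈ⁾)⁻¹ K⁽ᵈ⁾ (U⁽ᵈ⁾)⁻¹`. -/
theorem additive_kernel_factorization (D : ℕ) (n : Fin D → ℕ) (hn : ∀ d, 1 ≤ n d)
    (K : (d : Fin D) → Matrix (Fin (n d)) (Fin (n d)) ℝ)
    (𝓜 : Finset (Finset (Fin D))) (σ : ℕ → ℝ)
    (L R U : (d : Fin D) → Matrix (Fin (n d)) (Fin (n d)) ℝ)
    (hL : ∀ d i j, L d i j = if (j : ℕ) = 0 ∨ j = i then 1 else 0)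
    (hR : ∀ d i j, R d i j = if (i : ℕ) = 0 ∧ (j : ℕ) = 0 then 1 else 0)
    (hU : ∀ d i j, U d i j = if (i : ℕ) = 0 ∨ j = i then 1 else 0)
    (M : (d : Fin D) → Matrix (Fin (n d)) (Fin (n d)) ℝ)
    (hM : ∀ d, M d = (L d)⁻¹ * K d * (U d)⁻¹)
    (bigK bigL bigU bigM :
      Matrix ((d : Fin D) → Fin (n d)) ((d : Fin D) → Fin (n d)) ℝ)
    (hbigK : ∀ i j, bigK i j = ∑ m ∈ 𝓜, σ m.card * ∏ d ∈ m, K d (i d) (j d))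
    (hbigL : ∀ i j, bigL i j = ∏ d, L d (i d) (j d))
    (hbigU : ∀ i j, bigU i j = ∏ d, U d (i d) (j d))
    (hbigM : ∀ i j, bigM i j = ∑ m ∈ 𝓜, σ m.card *
        ((∏ d ∈ m, M d (i d) (j d)) * ∏ d ∈ mᶜ, R d (i d) (j d))) :
    bigK = bigL * bigM * bigU :=
  additive_kernel_factorization_general (fun d => ⟨0, hn d⟩) K 𝓜 (fun m => σ m.card) L R U
    (by simpa only [Fin.ext_iff] using hL) (by simpa only [Fin.ext_iff] using hR)
    (by simpa only [Fin.ext_iff] using hU) M hM bigK bigL bigU bigM hbigK hbigL hbigU hbigM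
end

section
/- Let N be a natural number, y : Fin N → ℝ, and C : ℝ → Matrix (Fin N) (Fin N) ℝ such that each entry of C has a derivative at θ₀ (entrywise, C has derivative C' at θ₀), C θ₀ is symmetric and invertible, and det (C θ₀) > 0. Define L : ℝ → ℝ by L θ = −(1/2)·( yᵀ·(C θ)⁻¹·y + Real.log (det (C θ)) + N·Real.log (2π) ). Then L has derivative at θ₀ equal to (1/2)·αᵀ·C'·α − (1/2)·trace((C θ₀)⁻¹·C'), where α = (C θ₀)⁻¹·y. -/
open Matrix

/-! Both `θ`-dependent terms are differentiated along the curve `C`: Jacobi's formula gives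
`(log det C)' = tr (C⁻¹ C')`, and `(C⁻¹)' = -C⁻¹ C' C⁻¹` gives
`(yᵀ C⁻¹ y)' = -(yᵀ C⁻¹) C' (C⁻¹ y)`. Symmetry of `C` turns the row vector `yᵀ C⁻¹` into `αᵀ`. -/

theorem sum_mul_mul_eq_dotProduct_mulVec {m n R : Type*} [Fintype m] [Fintype n]
    [NonUnitalSemiring R] (x : m → R) (M : Matrix m n R) (y : n → R) :
    ∑ i, ∑ j, x i * M i j * y j = x ⬝ᵥ M *ᵥ y := by
  simp only [dotProduct, mulVec, Finset.mul_sum, mul_assoc]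

theorem sum_det_updateRow {n R : Type*} [Fintype n] [DecidableEq n] [CommRing R]
    (A B : Matrix n n R) :
    ∑ i, (A.updateRow i (B i)).det = (A.adjugate * B).trace := by
  rw [trace_mul_comm]
  refine Finset.sum_congr rfl fun i _ => ?_
  rw [← cramer_transpose_apply, cramer_eq_adjugate_mulVec, ← adjugate_transpose, mulVec_transpose]
  rfl

section Deriv

variable {𝕜 𝔸 m n : Type*} [NontriviallyNormedField 𝕜] [Fintype n] {t : 𝕜}

open scoped Ring in
theorem hasDerivAt_ringInverse_comp {R : Type*} [NormedRing R] [HasSummableGeomSeries R]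
    [NormedAlgebra 𝕜 R] {f : 𝕜 → R} {f' : R} (hf : HasDerivAt f f' t) (hunit : IsUnit (f t)) :
    HasDerivAt (fun s => (f s)⁻¹ʳ) (-((f t)⁻¹ʳ * f' * (f t)⁻¹ʳ)) t := by
  obtain ⟨u, hu⟩ := hunit
  have hinv : HasFDerivAt Ring.inverse _ (f t) := hu ▸ hasFDerivAt_ringInverse (𝕜 := 𝕜) u
  refine (hinv.comp_hasDerivAt t hf).congr_deriv ?_
  simp [← hu]

theorem hasDerivAt_matrix_iff {ι κ F : Type*} [Finite κ] [NormedAddCommGroup F] [NormedSpace 𝕜 F]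
    {A : 𝕜 → Matrix ι κ F} {A' : Matrix ι κ F} :
    HasDerivAt A A' t ↔ ∀ i j, HasDerivAt (fun s => A s i j) (A' i j) t :=
  have := Fintype.ofFinite κ
  hasDerivAt_pi.trans (forall_congr' fun _ => hasDerivAt_pi)

theorem hasDerivAt_dotProduct_mulVec [Fintype m] [NormedRing 𝔸] [NormedAlgebra 𝕜 𝔸]
    {A : 𝕜 → Matrix m n 𝔸} {A' : Matrix m n 𝔸} (hA : HasDerivAt A A' t) (x : m → 𝔸) (y : n → 𝔸) :
    HasDerivAt (fun s => x ⬝ᵥ A s *ᵥ y) (x ⬝ᵥ A' *ᵥ y) t := by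
  simp only [← sum_mul_mul_eq_dotProduct_mulVec]
  exact HasDerivAt.fun_sum fun i _ => HasDerivAt.fun_sum fun j _ =>
    ((hasDerivAt_matrix_iff.mp hA i j).const_mul (x i)).mul_const (y j)

variable [DecidableEq n] [NormedCommRing 𝔸] [NormedAlgebra 𝕜 𝔸]
  {A : 𝕜 → Matrix n n 𝔸} {A' : Matrix n n 𝔸}

theorem hasDerivAt_matrix_det (hA : HasDerivAt A A' t) :
    HasDerivAt (fun s => (A s).det) ((A t).adjugate * A').trace t := by
  -- By multilinearity of `det` in the rows, the derivative replaces one row at a time.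
  let detRows : ContinuousMultilinearMap 𝕜 (fun _ : n => n → 𝔸) 𝔸 :=
    { (detRowAlternating (R := 𝔸)).toMultilinearMap.restrictScalars 𝕜 with
      cont := Continuous.matrix_det (A := fun M : Matrix n n 𝔸 => M) continuous_id }
  exact ((detRows.hasFDerivAt (A t)).comp_hasDerivAt t hA).congr_deriv
    ((detRows.linearDeriv_apply (A t) A').trans (sum_det_updateRow (A t) A'))

open scoped Matrix.Norms.Operator in
theorem hasDerivAt_matrix_inv [CompleteSpace 𝔸] (hA : HasDerivAt A A' t) (hunit : IsUnit (A t)) :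
    HasDerivAt (fun s => (A s)⁻¹) (-((A t)⁻¹ * A' * (A t)⁻¹)) t := by
  -- The uniformities of the operator norm and of `n → n → 𝔸` agree only after unfolding.
  have : @CompleteSpace (Matrix n n 𝔸) PseudoMetricSpace.toUniformSpace :=
    inferInstanceAs (CompleteSpace (n → n → 𝔸))
  simp only [nonsing_inv_eq_ringInverse]
  exact hasDerivAt_ringInverse_comp hA hunit

theorem hasDerivAt_dotProduct_inv_mulVec [CompleteSpace 𝔸] (hA : HasDerivAt A A' t)
    (hunit : IsUnit (A t)) (x y : n → 𝔸) :
    HasDerivAt (fun s => x ⬝ᵥ (A s)⁻¹ *ᵥ y)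
      (-((x ᵥ* (A t)⁻¹) ⬝ᵥ A' *ᵥ ((A t)⁻¹ *ᵥ y))) t := by
  refine (hasDerivAt_dotProduct_mulVec (hasDerivAt_matrix_inv hA hunit) x y).congr_deriv ?_
  rw [neg_mulVec, dotProduct_neg, ← dotProduct_mulVec, mulVec_mulVec, mulVec_mulVec, mul_assoc]

end Deriv

theorem hasDerivAt_log_matrix_det {n : Type*} [Fintype n] [DecidableEq n] {A : ℝ → Matrix n n ℝ}
    {A' : Matrix n n ℝ} {t : ℝ} (hA : HasDerivAt A A' t) (hdet : (A t).det ≠ 0) :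
    HasDerivAt (fun s => Real.log (A s).det) ((A t)⁻¹ * A').trace t := by
  refine ((hasDerivAt_matrix_det hA).log hdet).congr_deriv ?_
  rw [inv_def, smul_mul, trace_smul, Ring.inverse_eq_inv', smul_eq_mul, div_eq_inv_mul]

theorem mll_gradient_general {n : Type*} [Fintype n] [DecidableEq n] (y : n → ℝ) {θ₀ : ℝ}
    {C : ℝ → Matrix n n ℝ} {C' : Matrix n n ℝ} (hderiv : HasDerivAt C C' θ₀)
    (hdet : 0 < (C θ₀).det) :
    HasDerivAt
      (fun θ => -(1 / 2) * (y ⬝ᵥ (C θ)⁻¹ *ᵥ y + Real.log (C θ).det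
        + (Fintype.card n : ℝ) * Real.log (2 * Real.pi)))
      ((1 / 2) * (y ᵥ* (C θ₀)⁻¹) ⬝ᵥ C' *ᵥ ((C θ₀)⁻¹ *ᵥ y) - (1 / 2) * ((C θ₀)⁻¹ * C').trace)
      θ₀ := by
  have hunit : IsUnit (C θ₀) := (isUnit_iff_isUnit_det _).mpr hdet.ne'.isUnit
  have hquad := hasDerivAt_dotProduct_inv_mulVec hderiv hunit y y
  have hlogdet := hasDerivAt_log_matrix_det hderiv hdet.ne'
  exact (((hquad.fun_add hlogdet).add_const _).const_mul (-(1 / 2))).congr_deriv (by ring)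

/-- The derivative of the Gaussian process marginal log-likelihood
`L θ = -(1/2)(yᵀ (C θ)⁻¹ y + log det (C θ) + N log 2π)` with respect to the
hyperparameter `θ` at `θ₀` is `(1/2) αᵀ C' α - (1/2) tr((C θ₀)⁻¹ C')`, where
`α = (C θ₀)⁻¹ y` and `C'` is the entrywise derivative of `C` at `θ₀`. -/
theorem mll_gradient (N : ℕ) (y : Fin N → ℝ) (θ₀ : ℝ)
    (C : ℝ → Matrix (Fin N) (Fin N) ℝ) (C' : Matrix (Fin N) (Fin N) ℝ)
    (hderiv : ∀ i j, HasDerivAt (fun θ => C θ i j) (C' i j) θ₀)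
    (hsymm : (C θ₀).IsSymm) (hunit : IsUnit (C θ₀)) (hdet : 0 < (C θ₀).det)
    (L : ℝ → ℝ)
    (hL : ∀ θ, L θ = -(1 / 2) * ((∑ i, ∑ j, y i * (C θ)⁻¹ i j * y j)
        + Real.log (C θ).det + (N : ℝ) * Real.log (2 * Real.pi))) :
    HasDerivAt L
      ((1 / 2) * (∑ i, ∑ j, ((C θ₀)⁻¹.mulVec y) i * C' i j * ((C θ₀)⁻¹.mulVec y) j)
        - (1 / 2) * ((C θ₀)⁻¹ * C').trace) θ₀ := by
  have hα : y ᵥ* (C θ₀)⁻¹ = (C θ₀)⁻¹ *ᵥ y := by rw [← mulVec_transpose, hsymm.inv.eq]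
  simpa only [funext hL, sum_mul_mul_eq_dotProduct_mulVec, hα, Fintype.card_fin] using
    mll_gradient_general y (hasDerivAt_matrix_iff.mpr hderiv) hdet
end

section
/- Let D be a natural number, n : Fin D → ℕ, and for each d let L⁽ᵈ⁾ and U⁽ᵈ⁾ be (n d)-by-(n d) real matrices with L⁽ᵈ⁾ lower triangular and U⁽ᵈ⁾ upper triangular with respect to the natural order on Fin (n d). Let S be a set of multi-indices (functions i with i d ∈ Fin (n d)) that is downward closed with respect to the coordinatewise order. For each d define the one-mode bracket matrices 𝐋⁽ᵈ⁾ i j = L⁽ᵈ⁾ (i d) (j d) · Π_{d' ≠ d} (if i d' = j d' then 1 else 0) and 𝐔⁽ᵈ⁾ i j = U⁽ᵈ⁾ (i d) (j d) · Π_{d' ≠ d} (if i d' = j d' then 1 else 0), and let 𝐀 i j = Π_{d} (L⁽ᵈ⁾·U⁽ᵈ⁾) (i d) (j d). Then the chop of 𝐀 to S equals the ordered product over d = 0, …, D−1 of the chops of the 𝐋⁽ᵈ⁾ to S, followed by the ordered product over d = 0, …, D−1 of the chops of the 𝐔⁽ᵈ⁾ to S. -/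
/-!
The chop to a lower set `S` turns `M * N` into the product of the chops as soon as `M` is lower
triangular: for `i ∈ S` every nonzero term `M i k * N k j` has `k ≤ i`, hence `k ∈ S`. Kronecker
products are multiplicative, so `⊗ L⁽ᵈ⁾` is the product, in any order, of its one-mode factors. All
of these are lower triangular for the coordinatewise order, so the chop respects the factorization.
The factorization of `⊗ U⁽ᵈ⁾` follows by transposition, and `⊗ (L⁽ᵈ⁾ U⁽ᵈ⁾) = (⊗ L⁽ᵈ⁾) (⊗ U⁽ᵈ⁾)`.
-/

open Matrix

section Chop

variable {I R : Type*}

/-- The chop of a square matrix to a finite set `S` of indices. -/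
abbrev chop (S : Finset I) (M : Matrix I I R) : Matrix S S R :=
  M.submatrix (fun i : S => (i : I)) (fun j : S => (j : I))

/-- Lower triangularity with respect to a possibly partial order: `M i j` vanishes unless `j ≤ i`.
`Matrix.IsLowerTriangular` only makes `M i j` vanish for `i < j` and says nothing about
incomparable indices. Upper triangularity is expressed by applying this notion to `Mᵀ`. -/
def IsLowerSupported [LE I] [Zero R] (M : Matrix I I R) : Prop :=
  ∀ i j, M i j ≠ 0 → j ≤ i

theorem isLowerSupported_one [Preorder I] [DecidableEq I] [Zero R] [One R] :
    IsLowerSupported (1 : Matrix I I R) := fun i j hij => by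
  by_contra hji
  exact hij (one_apply_ne (by rintro rfl; exact hji le_rfl))

theorem chop_mul_of_isLowerSupported [LE I] [Fintype I] [NonUnitalNonAssocSemiring R]
    {S : Finset I} (hS : IsLowerSet (S : Set I)) {M : Matrix I I R} (hM : IsLowerSupported M)
    (N : Matrix I I R) : chop S (M * N) = chop S M * chop S N := by
  ext i j
  have sum_over_S : ∑ k ∈ S, M i k * N k j = ∑ k, M i k * N k j := by
    refine Finset.sum_subset (Finset.subset_univ S) fun k _ hk => ?_
    have hMik : M i k = 0 := by_contra fun h => hk (hS (hM i k h) i.2)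
    rw [hMik, zero_mul]
  simp only [submatrix_apply, mul_apply]
  rw [← sum_over_S, ← Finset.sum_coe_sort S]

theorem chop_list_prod_of_isLowerSupported [LE I] [Fintype I] [DecidableEq I] [Semiring R]
    {S : Finset I} (hS : IsLowerSet (S : Set I)) {l : List (Matrix I I R)}
    (hl : ∀ M ∈ l, IsLowerSupported M) : chop S l.prod = (l.map (chop S)).prod := by
  induction l with
  | nil => exact submatrix_one _ Subtype.val_injective
  | cons M l ih =>
    rw [List.forall_mem_cons] at hl
    rw [List.prod_cons, chop_mul_of_isLowerSupported hS hl.1, ih hl.2, List.map_cons,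
      List.prod_cons]

end Chop

theorem prod_map_mulSingle {ι : Type*} [DecidableEq ι] {M : ι → Type*} [∀ d, Monoid (M d)]
    {l : List ι} (hl : l.Nodup) (hmem : ∀ d, d ∈ l) (x : ∀ d, M d) :
    (l.map fun d => Pi.mulSingle d (x d)).prod = x := by
  let _ : Fintype ι := ⟨l.toFinset, fun d => List.mem_toFinset.2 (hmem d)⟩
  rw [← Finset.noncommProd_toFinset l _ (fun i _ j _ _ => Pi.mulSingle_apply_commute x i j) hl]
  exact Finset.noncommProd_mulSingle x

section KroneckerProd

variable {ι R : Type*} [Fintype ι]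

/-- The Kronecker product of a finite family of matrices, indexed by multi-indices. -/
def kroneckerProd [CommMonoid R] {α β : ι → Type*} (A : ∀ d, Matrix (α d) (β d) R) :
    Matrix (∀ d, α d) (∀ d, β d) R :=
  of fun i j => ∏ d, A d (i d) (j d)

theorem kroneckerProd_transpose [CommMonoid R] {α β : ι → Type*}
    (A : ∀ d, Matrix (α d) (β d) R) : (kroneckerProd A)ᵀ = kroneckerProd fun d => (A d)ᵀ :=
  rfl

theorem IsLowerSupported.kroneckerProd [CommMonoidWithZero R] {α : ι → Type*} [∀ d, LE (α d)]
    {A : ∀ d, Matrix (α d) (α d) R} (hA : ∀ d, IsLowerSupported (A d)) :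
    IsLowerSupported (kroneckerProd A) := fun i j hij d =>
  hA d (i d) (j d) fun h => hij (Finset.prod_eq_zero (Finset.mem_univ d) h)

variable [CommSemiring R]

theorem kroneckerProd_mul [DecidableEq ι] {α β γ : ι → Type*} [∀ d, Fintype (β d)]
    (A : ∀ d, Matrix (α d) (β d) R) (B : ∀ d, Matrix (β d) (γ d) R) :
    kroneckerProd (fun d => A d * B d) = kroneckerProd A * kroneckerProd B := by
  ext i j
  simp only [kroneckerProd, of_apply, mul_apply, Fintype.prod_sum, Finset.prod_mul_distrib]

variable {α : ι → Type*} [∀ d, DecidableEq (α d)]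

theorem kroneckerProd_one :
    kroneckerProd (1 : ∀ d, Matrix (α d) (α d) R) = 1 := by
  ext i j
  simp only [kroneckerProd, of_apply, Pi.one_apply, one_apply, Finset.prod_boole,
    Finset.mem_univ, forall_const, funext_iff]

variable [DecidableEq ι]

/-- The one-mode bracket matrix: the Kronecker product with `M` in position `d` and identity
matrices in every other position. -/
def oneMode (d : ι) (M : Matrix (α d) (α d) R) : Matrix (∀ d, α d) (∀ d, α d) R :=
  kroneckerProd (Pi.mulSingle d M)

theorem oneMode_apply (d : ι) (M : Matrix (α d) (α d) R) (i j : ∀ d, α d) :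
    oneMode d M i j =
      M (i d) (j d) * ∏ d' ∈ Finset.univ.erase d, if i d' = j d' then 1 else 0 := by
  rw [oneMode, kroneckerProd, of_apply, ← Finset.mul_prod_erase _ _ (Finset.mem_univ d),
    Pi.mulSingle_eq_same]
  congr 1
  refine Finset.prod_congr rfl fun d' hd' => ?_
  rw [Pi.mulSingle_eq_of_ne (Finset.ne_of_mem_erase hd'), one_apply]

theorem oneMode_transpose (d : ι) (M : Matrix (α d) (α d) R) :
    (oneMode d M)ᵀ = oneMode d Mᵀ := by
  rw [oneMode, kroneckerProd_transpose,
    ← Pi.mulSingle_op (fun _ => transpose) fun _ => transpose_one, oneMode]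

theorem IsLowerSupported.oneMode [∀ d, Preorder (α d)] {d : ι} {M : Matrix (α d) (α d) R}
    (hM : IsLowerSupported M) : IsLowerSupported (oneMode d M) := by
  refine IsLowerSupported.kroneckerProd fun d' => ?_
  obtain rfl | hd := eq_or_ne d' d
  · rwa [Pi.mulSingle_eq_same]
  · rw [Pi.mulSingle_eq_of_ne hd]
    exact isLowerSupported_one

variable [∀ d, Fintype (α d)]

/-- The Kronecker product of square matrices as a monoid homomorphism. -/
def kroneckerProdHom : (∀ d, Matrix (α d) (α d) R) →* Matrix (∀ d, α d) (∀ d, α d) R where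
  toFun := kroneckerProd
  map_one' := kroneckerProd_one
  map_mul' := kroneckerProd_mul

theorem prod_map_oneMode {l : List ι} (hl : l.Nodup) (hmem : ∀ d, d ∈ l)
    (A : ∀ d, Matrix (α d) (α d) R) :
    (l.map fun d => oneMode d (A d)).prod = kroneckerProd A := by
  have prod_eq := congrArg kroneckerProdHom (prod_map_mulSingle hl hmem A)
  rwa [map_list_prod, List.map_map] at prod_eq

end KroneckerProd

section ChopKroneckerProd

variable {ι R : Type*} [Fintype ι] [DecidableEq ι] [CommSemiring R] {α : ι → Type*}
  [∀ d, DecidableEq (α d)] [∀ d, Preorder (α d)] {S : Finset (∀ d, α d)}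

theorem chop_kroneckerProd_of_isLowerSupported [∀ d, Finite (α d)]
    (hS : IsLowerSet (S : Set (∀ d, α d))) {l : List ι} (hl : l.Nodup) (hmem : ∀ d, d ∈ l)
    {L : ∀ d, Matrix (α d) (α d) R} (hL : ∀ d, IsLowerSupported (L d)) :
    chop S (kroneckerProd L) = (l.map fun d => chop S (oneMode d (L d))).prod := by
  have := fun d => Fintype.ofFinite (α d)
  rw [← prod_map_oneMode hl hmem, chop_list_prod_of_isLowerSupported hS, List.map_map]
  · rfl
  · exact List.forall_mem_map.2 fun d _ => (hL d).oneMode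

theorem chop_kroneckerProd_of_isLowerSupported_transpose [∀ d, Finite (α d)]
    (hS : IsLowerSet (S : Set (∀ d, α d))) {l : List ι} (hl : l.Nodup) (hmem : ∀ d, d ∈ l)
    {U : ∀ d, Matrix (α d) (α d) R} (hU : ∀ d, IsLowerSupported (U d)ᵀ) :
    chop S (kroneckerProd U) = (l.map fun d => chop S (oneMode d (U d))).prod := by
  have hlower := chop_kroneckerProd_of_isLowerSupported hS (List.nodup_reverse.2 hl)
    (fun d => List.mem_reverse.2 (hmem d)) hU
  calc chop S (kroneckerProd U) = (chop S (kroneckerProd fun d => (U d)ᵀ))ᵀ := by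
        rw [← kroneckerProd_transpose, transpose_submatrix, transpose_transpose]
    _ = (l.reverse.map fun d => chop S (oneMode d (U d)ᵀ)).prodᵀ := by rw [hlower]
    _ = (l.map fun d => (chop S (oneMode d (U d)ᵀ))ᵀ).prod := by
        rw [transpose_list_prod, List.map_map, List.map_reverse, List.reverse_reverse]
        rfl
    _ = (l.map fun d => chop S (oneMode d (U d))).prod := by
        simp only [transpose_submatrix, oneMode_transpose, transpose_transpose]

theorem chopped_kronecker_LU_general [∀ d, Fintype (α d)]
    (hS : IsLowerSet (S : Set (∀ d, α d))) {L U : ∀ d, Matrix (α d) (α d) R}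
    (hL : ∀ d, IsLowerSupported (L d)) (hU : ∀ d, IsLowerSupported (U d)ᵀ)
    {l l' : List ι} (hl : l.Nodup) (hmem : ∀ d, d ∈ l) (hl' : l'.Nodup) (hmem' : ∀ d, d ∈ l') :
    chop S (kroneckerProd fun d => L d * U d) =
      (l.map fun d => chop S (oneMode d (L d))).prod *
        (l'.map fun d => chop S (oneMode d (U d))).prod := by
  rw [kroneckerProd_mul, chop_mul_of_isLowerSupported hS (IsLowerSupported.kroneckerProd hL),
    chop_kroneckerProd_of_isLowerSupported hS hl hmem hL,
    chop_kroneckerProd_of_isLowerSupported_transpose hS hl' hmem' hU]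

end ChopKroneckerProd

/-- Over a downward-closed (CUD) set `S` of multi-indices, the chop of the
Kronecker product `𝐀 = ⊗_d (L⁽ᵈ⁾ U⁽ᵈ⁾)` equals the ordered product of the chops of the
one-mode bracket matrices `𝐋⁽ᵈ⁾` followed by the ordered product of the chops of the
one-mode bracket matrices `𝐔⁽ᵈ⁾`, where `L⁽ᵈ⁾` is lower and `U⁽ᵈ⁾` upper triangular. -/
theorem chopped_kronecker_LU (D : ℕ) (n : Fin D → ℕ)
    (L U : (d : Fin D) → Matrix (Fin (n d)) (Fin (n d)) ℝ)
    (hLt : ∀ d, ∀ a b : Fin (n d), L d a b ≠ 0 → b ≤ a)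
    (hUt : ∀ d, ∀ a b : Fin (n d), U d a b ≠ 0 → a ≤ b)
    (S : Finset ((d : Fin D) → Fin (n d)))
    (hS : ∀ ⦃i j : (d : Fin D) → Fin (n d)⦄, (∀ d, i d ≤ j d) → j ∈ S → i ∈ S)
    (bL bU : (d : Fin D) →
      Matrix ((d : Fin D) → Fin (n d)) ((d : Fin D) → Fin (n d)) ℝ)
    (hbL : ∀ d i j, bL d i j =
      L d (i d) (j d) * ∏ d' ∈ Finset.univ.erase d, (if i d' = j d' then (1 : ℝ) else 0))
    (hbU : ∀ d i j, bU d i j =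
      U d (i d) (j d) * ∏ d' ∈ Finset.univ.erase d, (if i d' = j d' then (1 : ℝ) else 0))
    (bigA : Matrix ((d : Fin D) → Fin (n d)) ((d : Fin D) → Fin (n d)) ℝ)
    (hbigA : ∀ i j, bigA i j = ∏ d, (L d * U d) (i d) (j d)) :
    bigA.submatrix (fun i : ↥S => (i : (d : Fin D) → Fin (n d)))
        (fun j : ↥S => (j : (d : Fin D) → Fin (n d))) =
      ((List.finRange D).map (fun d =>
          (bL d).submatrix (fun i : ↥S => (i : (d : Fin D) → Fin (n d)))
            (fun j : ↥S => (j : (d : Fin D) → Fin (n d))))).prod *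
        ((List.finRange D).map (fun d =>
          (bU d).submatrix (fun i : ↥S => (i : (d : Fin D) → Fin (n d)))
            (fun j : ↥S => (j : (d : Fin D) → Fin (n d))))).prod := by
  obtain rfl : bigA = kroneckerProd fun d => L d * U d := Matrix.ext hbigA
  obtain rfl : bL = fun d => oneMode d (L d) := by ext d i j; rw [hbL, oneMode_apply]
  obtain rfl : bU = fun d => oneMode d (U d) := by ext d i j; rw [hbU, oneMode_apply]
  exact chopped_kronecker_LU_general (fun _ _ hji hj => hS hji hj) hLt
    (fun d a b => hUt d b a) (List.nodup_finRange D) List.mem_finRange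
    (List.nodup_finRange D) List.mem_finRange
end
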